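/- For Lebesgue-almost every β ∈ (1,∞), for every δ>0 the set E_β ∩ (0,δ) contains infinitely many isolated points of E_β and infinitely many accumulation points of E_β. -/

import Mathlib

open Set Filter MeasureTheory Topology

noncomputable section

/-- The β-transformation `x ↦ βx - ⌊βx⌋`. -/
def Tbeta (β x : ℝ) : ℝ := Int.fract (β * x)

/-- The survivor set `K_β(t)`: points of `[0,1)` whose orbit never enters `[0,t)`. -/
def survivor (β t : ℝ) : Set ℝ :=
  {x | x ∈ Set.Ico (0 : ℝ) 1 ∧ ∀ n : ℕ, t ≤ (Tbeta β)^[n] x}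

/-- The set-valued bifurcation set `E_β`. -/
def Ebif (β : ℝ) : Set ℝ :=
  {t | t ∈ Set.Ico (0 : ℝ) 1 ∧ ∀ t' : ℝ, t < t' → survivor β t' ≠ survivor β t}

/-- `(c)_β = Σ_{i≥1} c_i β^{-i}` for an infinite digit sequence (indexed from `0`). -/
def valSeq (β : ℝ) (c : ℕ → ℕ) : ℝ := ∑' i : ℕ, (c i : ℝ) / β ^ (i + 1)

/-- `(w 0^∞)_β` for a finite word `w`. -/
def valWord (β : ℝ) (w : List ℕ) : ℝ :=
  ∑ i ∈ Finset.range w.length, (w.getD i 0 : ℝ) / β ^ (i + 1)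

/-- `w⁺`: increment the last letter of `w`. -/
def wplus (w : List ℕ) : List ℕ := w.dropLast ++ [w.getLast! + 1]

/-- `w⁻`: decrement the last letter of `w`. -/
def wminus (w : List ℕ) : List ℕ := w.dropLast ++ [w.getLast! - 1]

/-- `θ`: increment every digit of `w` by one. -/
def theta (w : List ℕ) : List ℕ := w.map (· + 1)

/-- `L(w)`: the lexicographically largest cyclic permutation of `w`. -/
def maxCyc (w : List ℕ) : List ℕ := ((List.range w.length).map w.rotate).foldl max []

/-- `w^∞`: the periodic sequence with period block `w`. -/
def perSeq (w : List ℕ) : ℕ → ℕ := fun i => w.getD (i % w.length) 0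

/-- The sequence given by the word `w` followed by the sequence `c`. -/
def wordSeq (w : List ℕ) (c : ℕ → ℕ) : ℕ → ℕ :=
  fun i => if i < w.length then w.getD i 0 else c (i - w.length)

/-- Strict lexicographic order `≺` on sequences. -/
def seqLt (x y : ℕ → ℕ) : Prop := ∃ n, (∀ i < n, x i = y i) ∧ x n < y n

/-- Lexicographic order `≼` on sequences. -/
def seqLe (x y : ℕ → ℕ) : Prop := x = y ∨ seqLt x y

/-- The `n`-fold left shift `σⁿ` on sequences. -/
def shiftn (n : ℕ) (x : ℕ → ℕ) : ℕ → ℕ := fun i => x (i + n)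

/-- One step of the Farey recursion: insert the concatenation `w_i w_{i+1}`
between consecutive entries. -/
def fareyInsert : List (List ℕ) → List (List ℕ)
  | [] => []
  | [w] => [w]
  | w :: v :: rest => w :: (w ++ v) :: fareyInsert (v :: rest)

/-- The ordered set `F_n` of Farey words of level `n`. -/
def fareyLevel : ℕ → List (List ℕ)
  | 0 => [[0], [1]]
  | n + 1 => fareyInsert (fareyLevel n)

/-- `F`: all Farey words of length at least two. -/
def FareySet : Set (List ℕ) := {w | (∃ n, w ∈ fareyLevel n) ∧ w ≠ [0] ∧ w ≠ [1]}

/-- `F̂ = F ∪ {1}`. -/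
def FareyHat : Set (List ℕ) := FareySet ∪ {[1]}

/-- The extended Farey set `F_e = {θ^k(w) : w ∈ F̂, k ≥ 0}`. -/
def FareyExt : Set (List ℕ) := {w | ∃ v ∈ FareyHat, ∃ k : ℕ, w = theta^[k] v}

/-- A nonempty word is Lyndon iff it is strictly smaller than each of its nontrivial
cyclic rotations (equivalently: aperiodic and lexicographically smallest among its
cyclic permutations). -/
def IsLyndon (w : List ℕ) : Prop := w ≠ [] ∧ ∀ i, 0 < i → i < w.length → w < w.rotate i

/-- `L_e`: all Lyndon words over `ℕ ∪ {0}` except the single-letter word `0`. -/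
def LyndonExt : Set (List ℕ) := {w | IsLyndon w ∧ w ≠ [0]}

/-- `L`: Lyndon words over `{0,1}` of length at least `2`. -/
def LyndonBin : Set (List ℕ) := {w | IsLyndon w ∧ 2 ≤ w.length ∧ ∀ d ∈ w, d ≤ 1}

/-- The block of `Φ_s` emitted for current digit `d` after previous digit `p`:
`L(s)` for `00`, `s⁻` for `10`, `L(s)⁺` for `01`, `s` for `11`. -/
def phiBlock (s : List ℕ) (p d : ℕ) : List ℕ :=
  if d = 0 then (if p = 0 then maxCyc s else wminus s)
  else (if p = 0 then wplus (maxCyc s) else s)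

def phiAux (s : List ℕ) : ℕ → List ℕ → List ℕ
  | _, [] => []
  | p, d :: rest => phiBlock s p d ++ phiAux s d rest

/-- The substitution `Φ_s` on finite words; `s • r = subst s r`.  An initial digit `0`
produces `s⁻`, an initial digit `1` produces `L(s)⁺`, and thereafter runs
`0^k` resp. `1^l` produce `L(s)^{k-1}` resp. `s^{l-1}`, in accordance with
`Φ_s(0^{k₁}1^{l₁}…) = s⁻ L(s)^{k₁-1} L(s)⁺ s^{l₁-1} …` and
`Φ_s(1^{k₁}0^{l₁}…) = L(s)⁺ s^{k₁-1} s⁻ L(s)^{l₁-1} …`. -/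
def subst (s r : List ℕ) : List ℕ :=
  match r with
  | [] => []
  | d :: rest => phiBlock s (1 - d) d ++ phiAux s d rest

/-- The substitution `Φ_s` on infinite sequences, as the limit of its values
on initial segments (each digit contributes a nonempty block, so the `i`-th letter
is determined by the first `i+1` digits). -/
def phiSeq (s : List ℕ) (c : ℕ → ℕ) : ℕ → ℕ :=
  fun i => (subst s (List.ofFn fun j : Fin (i + 1) => c j)).getD i 0

/-- `Λ_e(m) = {s₁ • s₂ • … • s_m : s₁ ∈ F_e, s₂,…,s_m ∈ F}`. -/
def LambdaE (m : ℕ) : Set (List ℕ) :=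
  {w | ∃ s₁ ∈ FareyExt, ∃ rs : List (List ℕ),
    rs.length = m - 1 ∧ (∀ r ∈ rs, r ∈ FareySet) ∧ w = rs.foldl subst s₁}

/-- `Λ_e = ∪_{m≥1} Λ_e(m)`. -/
def LambdaExt : Set (List ℕ) := ⋃ m ∈ Set.Ici 1, LambdaE m

/-- `β_ℓ^S`: the base `β > 1` with `(L(S)^∞)_β = 1` (it is unique since
`β ↦ (c)_β` is strictly decreasing). -/
def betaL (S : List ℕ) : ℝ :=
  Classical.epsilon fun β : ℝ => 1 < β ∧ valSeq β (perSeq (maxCyc S)) = 1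

/-- `β_*^S`: the base `β > 1` with `(L(S)⁺ S⁻ L(S)^∞)_β = 1`. -/
def betaStar (S : List ℕ) : ℝ :=
  Classical.epsilon fun β : ℝ =>
    1 < β ∧ valSeq β (wordSeq (wplus (maxCyc S) ++ wminus S) (perSeq (maxCyc S))) = 1

/-- `β_r^S`: the base `β > 1` with `(L(S)⁺ S^∞)_β = 1`. -/
def betaR (S : List ℕ) : ℝ :=
  Classical.epsilon fun β : ℝ => 1 < β ∧ valSeq β (wordSeq (wplus (maxCyc S)) (perSeq S)) = 1

/-- The Lyndon/Farey interval `J^S = [β_ℓ^S, β_r^S]`. -/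
def Jint (S : List ℕ) : Set ℝ := Set.Icc (betaL S) (betaR S)

/-- The basic interval `I^S = [β_ℓ^S, β_*^S]`. -/
def Iint (S : List ℕ) : Set ℝ := Set.Icc (betaL S) (betaStar S)

/-- The exceptional set `E = (1,∞) ∖ ∪_{s ∈ F_e} J^s`. -/
def Eexc : Set ℝ := Set.Ioi 1 \ ⋃ s ∈ FareyExt, Jint s

/-- The relative exceptional set `E^S = (J^S ∖ I^S) ∖ ∪_{r ∈ F} J^{S•r}`. -/
def EexcRel (S : List ℕ) : Set ℝ :=
  (Jint S \ Iint S) \ ⋃ r ∈ FareySet, Jint (subst S r)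

/-- The infinitely renormalizable set `E_∞ = ∩_{m≥1} ∪_{S ∈ Λ_e(m)} J^S`. -/
def Einf : Set ℝ := ⋂ m ∈ Set.Ici 1, ⋃ S ∈ LambdaE m, Jint S

/-- `E_L = E ∪ {β_ℓ^s : s ∈ F_e}`. -/
def EL : Set ℝ := Eexc ∪ {x | ∃ s ∈ FareyExt, x = betaL s}

/-- The critical value `τ(β) = min{t > 0 : dim_H K_β(t) = 0}`. -/
def tau (β : ℝ) : ℝ := sInf {t : ℝ | 0 < t ∧ dimH (survivor β t) = 0}

end

/-- The polynomials `x ↦ x ^ j - a 0 * x ^ (j - 1) - … - a (j - 1)`. If `a` is the digit sequence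
of `1` in base `β`, then the value at `β` is the `j`-th point of the orbit of `1`. -/
def orbitPoly (a : ℕ → ℤ) : ℕ → ℝ → ℝ
  | 0, _ => 1
  | j + 1, x => x * orbitPoly a j x - a j

theorem orbitPoly_succ (a : ℕ → ℤ) (j : ℕ) (x : ℝ) :
    orbitPoly a (j + 1) x = x * orbitPoly a j x - a j := rfl

theorem continuous_orbitPoly (a : ℕ → ℤ) (j : ℕ) : Continuous (orbitPoly a j) := by
  induction j with
  | zero => exact continuous_const
  | succ j ih => exact (continuous_id.mul ih).sub continuous_const

theorem orbitPoly_add_le {a : ℕ → ℤ} (ha : ∀ i, 0 ≤ a i) {x : ℝ} (hx : 0 ≤ x) (j k : ℕ) :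
    orbitPoly a (j + k) x ≤ x ^ k * orbitPoly a j x := by
  induction k with
  | zero => simp
  | succ k ih =>
    have h1 : (0 : ℝ) ≤ a (j + k) := by exact_mod_cast ha _
    have h2 := mul_le_mul_of_nonneg_left ih hx
    rw [← add_assoc, orbitPoly_succ, pow_succ]
    nlinarith

theorem one_le_pow_mul_orbitPoly {a : ℕ → ℤ} (ha : ∀ i, 0 ≤ a i) {x : ℝ} (hx : 0 ≤ x) {n : ℕ}
    (han : 1 ≤ a n) (hn : 0 ≤ orbitPoly a (n + 1) x) {j : ℕ} (hj : j ≤ n) :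
    1 ≤ x ^ (n + 1 - j) * orbitPoly a j x := by
  obtain ⟨k, rfl⟩ := Nat.exists_eq_add_of_le hj
  have h1 : (1 : ℝ) ≤ a (j + k) := by exact_mod_cast han
  have h2 := mul_le_mul_of_nonneg_left (orbitPoly_add_le ha hx j k) hx
  rw [orbitPoly_succ] at hn
  rw [show j + k + 1 - j = k + 1 by omega, pow_succ]
  nlinarith

theorem orbitPoly_nonneg {a : ℕ → ℤ} (ha : ∀ i, 0 ≤ a i) {x : ℝ} (hx : 0 < x) {n : ℕ}
    (hn : 0 ≤ orbitPoly a n x) {j : ℕ} (hj : j ≤ n) : 0 ≤ orbitPoly a j x := by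
  obtain ⟨k, rfl⟩ := Nat.exists_eq_add_of_le hj
  exact nonneg_of_mul_nonneg_right (hn.trans (orbitPoly_add_le ha hx.le j k)) (pow_pos hx k)

theorem orbitPoly_succ_sub (a : ℕ → ℤ) (j : ℕ) (x y : ℝ) :
    orbitPoly a (j + 1) y - orbitPoly a (j + 1) x =
      y * (orbitPoly a j y - orbitPoly a j x) + (y - x) * orbitPoly a j x := by
  simp only [orbitPoly_succ]
  ring

theorem orbitPoly_mono {a : ℕ → ℤ} {n : ℕ} {x y : ℝ} (hx : ∀ j ≤ n, 0 ≤ orbitPoly a j x)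
    (hy : 0 ≤ y) (hxy : x ≤ y) {j : ℕ} (hj : j ≤ n) : orbitPoly a j x ≤ orbitPoly a j y := by
  induction j with
  | zero => exact le_rfl
  | succ j ih =>
    have h1 := mul_nonneg hy (sub_nonneg.2 (ih (by omega)))
    have h2 := mul_nonneg (sub_nonneg.2 hxy) (hx j (by omega))
    have h3 := orbitPoly_succ_sub a j x y
    linarith

theorem pow_mul_orbitPoly_sub_le {a : ℕ → ℤ} {n : ℕ} {x y : ℝ}
    (hx : ∀ j ≤ n, 0 ≤ orbitPoly a j x) (hy : 0 ≤ y) (hxy : x ≤ y) {j k : ℕ} (hjk : j + k ≤ n) :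
    y ^ k * (orbitPoly a j y - orbitPoly a j x) ≤
      orbitPoly a (j + k) y - orbitPoly a (j + k) x := by
  induction k with
  | zero => simp
  | succ k ih =>
    have h1 := mul_le_mul_of_nonneg_left (ih (by omega)) hy
    have h2 := mul_nonneg (sub_nonneg.2 hxy) (hx (j + k) (by omega))
    have h3 := orbitPoly_succ_sub a (j + k) x y
    rw [← add_assoc, h3, pow_succ]
    nlinarith

theorem orbitPoly_sub_le {a : ℕ → ℤ} {n : ℕ} {x y b : ℝ}
    (hx : ∀ j ≤ n, 0 ≤ orbitPoly a j x) (hx1 : ∀ j ≤ n, orbitPoly a j x ≤ 1) (hy : 0 ≤ y)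
    (hxy : x ≤ y) (hyb : y ≤ b) (hb : 1 ≤ b) {j : ℕ} (hj : j ≤ n) :
    (b - 1) * (orbitPoly a j y - orbitPoly a j x) ≤ (b ^ j - 1) * (y - x) := by
  induction j with
  | zero => simp [orbitPoly]
  | succ j ih =>
    have h0 := sub_nonneg.2 (orbitPoly_mono hx hy hxy (show j ≤ n by omega))
    have h1 := mul_le_mul_of_nonneg_left (ih (by omega)) (zero_le_one.trans hb)
    have h2 := mul_le_mul_of_nonneg_left (hx1 j (by omega)) (sub_nonneg.2 hxy)
    have h3 := mul_le_mul_of_nonneg_right hyb h0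
    have h4 : orbitPoly a (j + 1) y - orbitPoly a (j + 1) x ≤
        b * (orbitPoly a j y - orbitPoly a j x) + (y - x) := by
      rw [orbitPoly_succ_sub]
      linarith
    have h5 := mul_le_mul_of_nonneg_left h4 (sub_nonneg.2 hb)
    rw [pow_succ]
    nlinarith

/-- The orbit of `1` under the β-transformation. -/
noncomputable def orbitOne (β : ℝ) (n : ℕ) : ℝ := (Tbeta β)^[n] 1

theorem orbitOne_zero (β : ℝ) : orbitOne β 0 = 1 := rfl

theorem orbitOne_succ (β : ℝ) (n : ℕ) : orbitOne β (n + 1) = Int.fract (β * orbitOne β n) :=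
  Function.iterate_succ_apply' _ _ _

theorem orbitOne_nonneg (β : ℝ) (n : ℕ) : 0 ≤ orbitOne β n := by
  cases n with
  | zero => simp [orbitOne]
  | succ n => rw [orbitOne_succ]; exact Int.fract_nonneg _

theorem orbitOne_succ_lt_one (β : ℝ) (n : ℕ) : orbitOne β (n + 1) < 1 := by
  rw [orbitOne_succ]; exact Int.fract_lt_one _

theorem orbitOne_le_one (β : ℝ) (n : ℕ) : orbitOne β n ≤ 1 := by
  cases n with
  | zero => simp [orbitOne]
  | succ n => exact (orbitOne_succ_lt_one β n).le

/-- The digits of `1` in base `β`. -/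
noncomputable def digitOne (β : ℝ) (n : ℕ) : ℤ := ⌊β * orbitOne β n⌋

theorem orbitOne_succ_eq (β : ℝ) (n : ℕ) :
    orbitOne β (n + 1) = β * orbitOne β n - digitOne β n := orbitOne_succ β n

theorem digitOne_nonneg {β : ℝ} (hβ : 0 ≤ β) (n : ℕ) : 0 ≤ digitOne β n :=
  Int.floor_nonneg.2 (mul_nonneg hβ (orbitOne_nonneg β n))

theorem orbitPoly_digitOne (β : ℝ) (n : ℕ) : orbitPoly (digitOne β) n β = orbitOne β n := by
  induction n with
  | zero => rfl
  | succ n ih => rw [orbitPoly_succ, ih, orbitOne_succ_eq]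

theorem orbitOne_eq_orbitPoly {a : ℕ → ℤ} {n : ℕ} {x : ℝ}
    (h0 : ∀ j ≤ n, 0 ≤ orbitPoly a j x) (h1 : ∀ j < n, orbitPoly a (j + 1) x < 1) {j : ℕ}
    (hj : j ≤ n) : orbitOne x j = orbitPoly a j x := by
  induction j with
  | zero => rfl
  | succ j ih =>
    rw [orbitOne_succ, ih (by omega), Int.fract_eq_iff]
    refine ⟨h0 _ hj, h1 _ (by omega), a j, ?_⟩
    rw [orbitPoly_succ]
    ring

theorem countable_orbitOne_eq_zero : {β : ℝ | ∃ n, orbitOne β n = 0}.Countable := by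
  refine (Algebraic.countable ℤ ℝ).mono ?_
  rintro β ⟨n, hn⟩
  have key : ∀ n, ∃ q : Polynomial ℤ, q.coeff n = 1 ∧ Polynomial.aeval β q = orbitOne β n := by
    intro n
    induction n with
    | zero => exact ⟨1, by simp, by simp [orbitOne]⟩
    | succ n ih =>
      obtain ⟨q, hq, hv⟩ := ih
      refine ⟨Polynomial.X * q - Polynomial.C (digitOne β n), ?_, ?_⟩
      · rw [Polynomial.coeff_sub, Polynomial.coeff_X_mul, Polynomial.coeff_C_succ, hq, sub_zero]
      · simp [hv, orbitOne_succ_eq]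
  obtain ⟨q, hq, hv⟩ := key n
  exact ⟨q, fun h => by simp [h] at hq, hv.trans hn⟩

theorem orbitOne_succ_of_digit_lt {β : ℝ} (hβ : 0 ≤ β) {n : ℕ} (h : ¬ 1 ≤ digitOne β n) :
    orbitOne β (n + 1) = β * orbitOne β n := by
  have h0 : digitOne β n = 0 := by have := digitOne_nonneg hβ n; omega
  rw [orbitOne_succ_eq, h0]
  simp

theorem exists_min_orbitOne {β : ℝ} (h0 : ∀ n, orbitOne β n ≠ 0) (N : ℕ) :
    ∃ r > 0, ∀ j ≤ N, r ≤ orbitOne β j := by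
  obtain ⟨i, -, hi⟩ := Finset.exists_min_image (Finset.range (N + 1)) (orbitOne β) ⟨0, by simp⟩
  exact ⟨orbitOne β i, (orbitOne_nonneg β i).lt_of_ne (h0 i).symm,
    fun j hj => hi j (by simp; omega)⟩

/-- Infinitely often, the orbit of `1` comes within a bounded factor of its running minimum through
a nonzero digit. -/
theorem exists_frequently_near_record {β : ℝ} (hβ : 1 < β) (h0 : ∀ n, orbitOne β n ≠ 0) :
    ∃ C > 0, ∀ N : ℕ, ∃ n ≥ N, 1 ≤ digitOne β n ∧
      ∀ j ≤ n, orbitOne β (n + 1) ≤ C * orbitOne β j := by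
  have hβ0 : 0 ≤ β := by linarith
  by_cases hr : ∃ r > 0, ∀ n, r ≤ orbitOne β n
  · obtain ⟨r, hr0, hr⟩ := hr
    refine ⟨1 / r, by positivity, fun N => ?_⟩
    have hd : ∃ n ≥ N, 1 ≤ digitOne β n := by
      by_contra! hd
      have hgrow : ∀ k, orbitOne β (N + k) = β ^ k * orbitOne β N := by
        intro k
        induction k with
        | zero => simp
        | succ k ih =>
          rw [← add_assoc, orbitOne_succ_of_digit_lt hβ0 (not_le.2 (hd _ (by omega))), ih]
          ring
      obtain ⟨k, hk⟩ := pow_unbounded_of_one_lt (1 / r) hβ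
      rw [div_lt_iff₀ hr0] at hk
      have h1 := mul_le_mul_of_nonneg_left (hr N) (pow_nonneg hβ0 k)
      have h2 := orbitOne_le_one β (N + k)
      rw [hgrow] at h2
      linarith
    obtain ⟨n, hn, hdn⟩ := hd
    refine ⟨n, hn, hdn, fun j _ => (orbitOne_le_one β _).trans ?_⟩
    rw [div_mul_eq_mul_div, one_mul, le_div_iff₀ hr0, one_mul]
    exact hr j
  · push Not at hr
    refine ⟨1, one_pos, fun N => ?_⟩
    obtain ⟨r, hr0, hrN⟩ := exists_min_orbitOne h0 N
    classical
    have hex := hr r hr0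
    have hlt := Nat.find_spec hex
    have hmin : ∀ j < Nat.find hex, r ≤ orbitOne β j := fun j hj => not_lt.1 (Nat.find_min hex hj)
    have hN : N < Nat.find hex := by
      by_contra h
      exact absurd (hrN _ (not_lt.1 h)) (not_le.2 hlt)
    obtain ⟨n, hn⟩ : ∃ n, Nat.find hex = n + 1 := ⟨Nat.find hex - 1, by omega⟩
    rw [hn] at hlt hmin hN
    refine ⟨n, by omega, ?_, fun j hj => ?_⟩
    · by_contra hd
      have h1 := hmin n (by omega)
      rw [orbitOne_succ_of_digit_lt hβ0 hd] at hlt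
      nlinarith
    · have := hmin j (by omega)
      linarith

/-- To the left of a near-record parameter lies an interval in whose initial part, of definite
proportion, the orbit of `1` drops below a third of its running minimum. -/
theorem exists_left_interval {β C : ℝ} (hβ : 1 < β) (hC : 0 < C) {n : ℕ}
    (hd : 1 ≤ digitOne β n) (hpos : orbitOne β (n + 1) ≠ 0)
    (hle : ∀ j ≤ n, orbitOne β (n + 1) ≤ C * orbitOne β j) :
    ∃ b < β, β ^ n * (β - b) ≤ 1 ∧
      ∀ y, b < y → y - b ≤ (β - 1) / (3 * β * (1 + C) ^ 2) * (β - b) → y ≤ β →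
        ∀ j ≤ n, orbitOne y (n + 1) ≤ orbitOne y j / 3 := by
  have hβ0 : 0 < β := by linarith
  have ha : ∀ i, 0 ≤ digitOne β i := digitOne_nonneg hβ0.le
  set P := orbitPoly (digitOne β) with hP
  have hPβ : ∀ j, P j β = orbitOne β j := orbitPoly_digitOne β
  have hNpos : 0 < P (n + 1) β := by
    rw [hPβ]; exact (orbitOne_nonneg β _).lt_of_ne hpos.symm
  have hPcont : Continuous (P (n + 1)) := continuous_orbitPoly _ _
  have hP0 : P (n + 1) 0 < 0 := by
    have : (1 : ℝ) ≤ digitOne β n := by exact_mod_cast hd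
    rw [hP, orbitPoly_succ]
    linarith
  obtain ⟨b, ⟨⟨hb0, hbβ⟩, hPb⟩, hbmax⟩ :
      ∃ b, IsGreatest (Icc 0 β ∩ {x | P (n + 1) x ≤ 0}) b :=
    (isCompact_Icc.inter_right (isClosed_le hPcont continuous_const)).exists_isGreatest
      ⟨0, ⟨le_rfl, hβ0.le⟩, hP0.le⟩
  have hgt : ∀ x, b < x → x ≤ β → 0 < P (n + 1) x := by
    intro x hx hxβ
    by_contra h
    exact absurd (hbmax ⟨⟨hb0.trans hx.le, hxβ⟩, not_lt.1 h⟩) (not_le.2 hx)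
  have hPb0 : P (n + 1) b = 0 := by
    obtain ⟨x, hx, hx0⟩ := intermediate_value_Icc hbβ hPcont.continuousOn
      (show (0 : ℝ) ∈ Icc (P (n + 1) b) (P (n + 1) β) from ⟨hPb, hNpos.le⟩)
    rcases hx.1.eq_or_lt with h | h
    · rw [h]; exact hx0
    · exact absurd hx0 (hgt x h hx.2).ne'
  have hb_pos : 0 < b := hb0.lt_of_ne (by rintro rfl; linarith)
  have hb_lt : b < β := hbβ.lt_of_ne (by rintro rfl; linarith)
  have hnn : ∀ x, b ≤ x → x ≤ β → ∀ j ≤ n + 1, 0 ≤ P j x := by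
    intro x hx hxβ j hj
    refine orbitPoly_nonneg ha (hb_pos.trans_le hx) ?_ hj
    rcases hx.eq_or_lt with rfl | h
    · exact hPb0.ge
    · exact (hgt x h hxβ).le
  have hslope : β ^ n * (β - b) ≤ P (n + 1) β := by
    have h := pow_mul_orbitPoly_sub_le (hnn b le_rfl hbβ) hβ0.le hbβ
      (show 1 + n ≤ n + 1 by omega)
    rw [add_comm 1 n, ← hP, hPb0] at h
    have h1 : P 1 β - P 1 b = β - b := by simp [hP, orbitPoly]
    rwa [h1, sub_zero] at h
  refine ⟨b, hb_lt, hslope.trans ((hPβ _).trans_le (orbitOne_le_one β _)), ?_⟩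
  intro y hby hyl hyβ j hj
  have hy0 : 0 < y := hb_pos.trans hby
  have hmono : ∀ x, b ≤ x → x ≤ β → ∀ j ≤ n + 1, P j x ≤ P j β := fun x hx hxβ j hj =>
    orbitPoly_mono (hnn x hx hxβ) hβ0.le hxβ hj
  have hOy : ∀ j ≤ n + 1, orbitOne y j = P j y := fun j hj =>
    orbitOne_eq_orbitPoly (hnn y hby.le hyβ) (fun i hi =>
      (hmono y hby.le hyβ (i + 1) (by omega)).trans_lt
        ((hPβ _).trans_lt (orbitOne_succ_lt_one β i))) hj
  rw [hOy _ le_rfl, hOy j (by omega)]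
  have hm0 : 0 ≤ orbitOne β j := orbitOne_nonneg β j
  have hm1 : orbitOne β j ≤ 1 := orbitOne_le_one β j
  have hlow : orbitOne β j ≤ (1 + C) * P j y := by
    have h1 := pow_mul_orbitPoly_sub_le (j := j) (k := n + 1 - j) (hnn y hby.le hyβ) hβ0.le hyβ
      (by omega)
    rw [show j + (n + 1 - j) = n + 1 by omega, ← hP, hPβ, hPβ] at h1
    have h2 := one_le_pow_mul_orbitPoly ha hy0.le hd (hgt y hby hyβ).le hj
    rw [← hP] at h2
    have hPy := hnn y hby.le hyβ j (by omega)
    have h3 : y ^ (n + 1 - j) * P j y ≤ β ^ (n + 1 - j) * P j y := by gcongr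
    have h4 := hle j hj
    have h5 := (hgt y hby hyβ).le
    have hD : 0 < β ^ (n + 1 - j) := by positivity
    have h6 : C * orbitOne β j ≤ C * (β ^ (n + 1 - j) * P j y) :=
      mul_le_mul_of_nonneg_left (by linarith) hC.le
    have h7 : β ^ (n + 1 - j) * orbitOne β j ≤ β ^ (n + 1 - j) * ((1 + C) * P j y) := by
      nlinarith
    exact le_of_mul_le_mul_left h7 hD
  have hup : (β - 1) * P (n + 1) y ≤ β ^ (n + 1) * (y - b) := by
    have h := orbitPoly_sub_le (hnn b le_rfl hbβ)
      (fun i hi => (hmono b le_rfl hbβ i hi).trans ((hPβ i).trans_le (orbitOne_le_one β i)))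
      hy0.le hby.le hyβ hβ.le (le_refl (n + 1))
    rw [← hP, hPb0] at h
    nlinarith
  have h1 : (β - 1) * P (n + 1) y ≤
      (β - 1) * (P (n + 1) β / (3 * (1 + C) ^ 2)) := by
    calc (β - 1) * P (n + 1) y ≤ β ^ (n + 1) * (y - b) := hup
      _ ≤ β ^ (n + 1) * ((β - 1) / (3 * β * (1 + C) ^ 2) * (β - b)) := by gcongr
      _ = (β - 1) * (β ^ n * (β - b) / (3 * (1 + C) ^ 2)) := by
        rw [pow_succ]; field_simp
      _ ≤ _ := by
        have : 0 ≤ β - 1 := by linarith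
        gcongr
  have h2 := le_of_mul_le_mul_left h1 (by linarith)
  have h3 : P (n + 1) β ≤ C * ((1 + C) * P j y) := by
    rw [hPβ]
    exact (hle j hj).trans (by gcongr)
  have hPy := hnn y hby.le hyβ j (by omega)
  refine h2.trans ?_
  rw [div_le_div_iff₀ (by positivity) (by positivity)]
  nlinarith [mul_nonneg hC.le hPy]

/-- A set that omits a definite proportion of arbitrarily short intervals to the left of each of
its points is Lebesgue null. -/
theorem volume_eq_zero_of_left_porous {S : Set ℝ}
    (h : ∀ x ∈ S, ∃ l > 0, ∀ ε > 0, ∃ b < x, x - b < ε ∧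
      ∀ y, b < y → y - b ≤ l * (x - b) → y ≤ x → y ∉ S) : volume S = 0 := by
  have hd := IsUnifLocDoublingMeasure.ae_tendsto_measure_inter_div (volume : Measure ℝ) S 1
  refine le_antisymm ?_ zero_le
  calc volume S = volume (S ∩ S) := by rw [inter_self]
    _ ≤ volume.restrict S S := Measure.le_restrict_apply _ _
    _ ≤ _ := measure_mono ?_
    _ = 0 := ae_iff.1 hd
  intro x hx hlim
  obtain ⟨l, hl, h⟩ := h x hx
  choose b hbx hb hbS using fun k : ℕ => h (1 / ((k : ℝ) + 1)) (by positivity)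
  have hδ : Tendsto (fun k => (x - b k) / 2) atTop (𝓝[>] 0) := by
    refine tendsto_nhdsWithin_iff.2 ⟨?_, Eventually.of_forall fun k => ?_⟩
    · refine squeeze_zero (fun k => ?_) (fun k => ?_)
        (tendsto_one_div_add_atTop_nhds_zero_nat (𝕜 := ℝ))
      · linarith [hbx k]
      · linarith [hb k, hbx k]
    · have := hbx k
      simp only [mem_Ioi]
      linarith
  have hball : ∀ k, Metric.closedBall ((b k + x) / 2) ((x - b k) / 2) = Icc (b k) x := by
    intro k
    rw [Real.closedBall_eq_Icc]
    congr 1 <;> ring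
  have hlim1 := hlim (fun k => (b k + x) / 2) (fun k => (x - b k) / 2) hδ
    (Eventually.of_forall fun k => by
      rw [one_mul, hball]
      exact ⟨(hbx k).le, le_rfl⟩)
  have hle : ∀ k, volume (S ∩ Metric.closedBall ((b k + x) / 2) ((x - b k) / 2)) /
      volume (Metric.closedBall ((b k + x) / 2) ((x - b k) / 2)) ≤ ENNReal.ofReal (1 - l) := by
    intro k
    have hpos : 0 < x - b k := by linarith [hbx k]
    rw [hball]
    refine ENNReal.div_le_of_le_mul ?_
    calc volume (S ∩ Icc (b k) x)
        ≤ volume ({b k} ∪ Icc (b k + l * (x - b k)) x) := by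
          refine measure_mono ?_
          rintro y ⟨hyS, hy1, hy2⟩
          rcases hy1.eq_or_lt with rfl | hy1
          · exact Or.inl rfl
          · right
            by_contra hy
            refine hbS k y hy1 ?_ hy2 hyS
            by_contra hlt
            exact hy ⟨by linarith, hy2⟩
      _ ≤ volume {b k} + volume (Icc (b k + l * (x - b k)) x) := measure_union_le _ _
      _ = ENNReal.ofReal (1 - l) * volume (Icc (b k) x) := by
          rw [Real.volume_singleton, zero_add, Real.volume_Icc, Real.volume_Icc,
            ← ENNReal.ofReal_mul' hpos.le]
          congr 1
          ring
  have h1 : (1 : ENNReal) ≤ ENNReal.ofReal (1 - l) := le_of_tendsto' hlim1 hle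
  rw [ENNReal.one_le_ofReal] at h1
  linarith

theorem ae_frequently_deep_record :
    ∀ᵐ β : ℝ, 1 < β → (∀ n, orbitOne β n ≠ 0) ∧
      ∀ N : ℕ, ∃ n ≥ N, ∀ j < n, orbitOne β n ≤ orbitOne β j / 3 := by
  have hnull : ∀ N : ℕ, volume {β : ℝ | 1 < β ∧ (∀ n, orbitOne β n ≠ 0) ∧
      ∀ n ≥ N, ¬ ∀ j < n, orbitOne β n ≤ orbitOne β j / 3} = 0 := by
    intro N
    refine volume_eq_zero_of_left_porous ?_
    rintro β ⟨hβ, h0, -⟩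
    obtain ⟨C, hC, hrec⟩ := exists_frequently_near_record hβ h0
    have hβ1 : 0 < β - 1 := by linarith
    refine ⟨(β - 1) / (3 * β * (1 + C) ^ 2), by positivity, fun ε hε => ?_⟩
    obtain ⟨k, hk⟩ := pow_unbounded_of_one_lt (1 / ε) hβ
    obtain ⟨n, hn, hd, hle⟩ := hrec (max N k)
    obtain ⟨b, hb, hbn, hy⟩ := exists_left_interval hβ hC hd (h0 _) hle
    refine ⟨b, hb, ?_, ?_⟩
    · have h1 : 1 / ε < β ^ n :=
        hk.trans_le (pow_le_pow_right₀ hβ.le ((le_max_right N k).trans hn))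
      rw [div_lt_iff₀ hε] at h1
      exact lt_of_mul_lt_mul_left (hbn.trans_lt h1) (by positivity)
    · rintro y hby hyl hyβ ⟨-, -, hyS⟩
      exact hyS (n + 1) (((le_max_left N k).trans hn).trans (Nat.le_succ n))
        fun j hj => hy y hby hyl hyβ j (by omega)
  have hall : ∀ᵐ β : ℝ, ∀ N : ℕ, ¬ (1 < β ∧ (∀ n, orbitOne β n ≠ 0) ∧
      ∀ n ≥ N, ¬ ∀ j < n, orbitOne β n ≤ orbitOne β j / 3) := by
    refine ae_all_iff.2 fun N => ?_
    rw [ae_iff]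
    simpa only [not_not] using hnull N
  filter_upwards [hall, countable_orbitOne_eq_zero.ae_notMem volume] with β hN h0 hβ
  have h0 : ∀ n, orbitOne β n ≠ 0 := fun n hn => h0 ⟨n, hn⟩
  refine ⟨h0, fun N => ?_⟩
  by_contra! hc
  refine hN N ⟨hβ, h0, fun n hn hall => ?_⟩
  obtain ⟨j, hj, hlt⟩ := hc n hn
  exact absurd (hall j hj) (not_le.2 hlt)

theorem mem_Ebif_of_le_iterate {β t : ℝ} (ht : t ∈ Ico (0 : ℝ) 1)
    (h : ∀ n, t ≤ (Tbeta β)^[n] t) : t ∈ Ebif β := by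
  refine ⟨ht, fun t' htt' heq => ?_⟩
  have hmem : t ∈ survivor β t' := heq ▸ (⟨ht, h⟩ : t ∈ survivor β t)
  exact absurd (hmem.2 0) (not_le.2 htt')

theorem exists_survivor_near {β y t' : ℝ} (hy : y ∈ Ebif β) (ht' : y < t') :
    ∃ z ∈ Ico y t', ∀ k, y ≤ (Tbeta β)^[k] z := by
  by_contra! hc
  refine hy.2 t' ht' (Subset.antisymm ?_ ?_)
  · exact fun x hx => ⟨hx.1, fun n => ht'.le.trans (hx.2 n)⟩
  · refine fun x hx => ⟨hx.1, fun n => ?_⟩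
    by_contra hlt
    obtain ⟨k, hk⟩ := hc ((Tbeta β)^[n] x) ⟨hx.2 n, not_le.1 hlt⟩
    rw [← Function.iterate_add_apply] at hk
    exact absurd (hx.2 _) (not_le.2 hk)

/-- Around a point whose orbit stays positive, the iterates of the β-transformation are locally
affine. -/
theorem eventually_iterate_eq {β t : ℝ} (ht : ∀ k, 0 < (Tbeta β)^[k] t) (k : ℕ) :
    ∀ᶠ z in 𝓝 t, (Tbeta β)^[k] z = (Tbeta β)^[k] t + β ^ k * (z - t) := by
  induction k with
  | zero => exact Eventually.of_forall fun z => by simp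
  | succ k ih =>
    have hlim : Tendsto (fun z => (Tbeta β)^[k + 1] t + β ^ (k + 1) * (z - t)) (𝓝 t)
        (𝓝 ((Tbeta β)^[k + 1] t)) := by
      have hc : Continuous fun z => (Tbeta β)^[k + 1] t + β ^ (k + 1) * (z - t) := by fun_prop
      simpa using hc.tendsto t
    have hlt : (Tbeta β)^[k + 1] t < 1 := by
      rw [Function.iterate_succ_apply']; exact Int.fract_lt_one _
    filter_upwards [ih, hlim.eventually (Ioo_mem_nhds (ht (k + 1)) hlt)] with z hz hmem
    rw [Function.iterate_succ_apply', hz, Tbeta, Int.fract_eq_iff]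
    refine ⟨hmem.1.le, hmem.2, ⌊β * (Tbeta β)^[k] t⌋, ?_⟩
    rw [Function.iterate_succ_apply', Tbeta, ← Int.self_sub_floor]
    ring

/-- Points close to `1` follow the orbit of `1`. -/
theorem iterate_eq_of_lt_one {β x : ℝ} (hβ : 0 < β) {n : ℕ} (hx : x < 1)
    (h : ∀ j < n, 0 ≤ orbitOne β j - β ^ j * (1 - x)) {j : ℕ} (hj : j < n) :
    (Tbeta β)^[j] x = orbitOne β j - β ^ j * (1 - x) := by
  induction j with
  | zero => simp [orbitOne_zero]
  | succ j ih =>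
    rw [Function.iterate_succ_apply', ih (by omega), Tbeta, Int.fract_eq_iff]
    have h1 : 0 < β ^ (j + 1) * (1 - x) := mul_pos (pow_pos hβ _) (by linarith)
    refine ⟨h _ hj, by linarith [orbitOne_le_one β (j + 1)], digitOne β j, ?_⟩
    rw [orbitOne_succ_eq]
    ring

theorem exists_isolated_of_deep_record {β : ℝ} (hβ : 1 < β) {n : ℕ} (hn : 2 ≤ β ^ n)
    (hpos : 0 < orbitOne β (n + 1))
    (hrec : ∀ j ≤ n, orbitOne β (n + 1) ≤ orbitOne β j / 3) :
    ∃ t ∈ Ebif β, 0 < t ∧ (∀ j ≤ n, t ≤ orbitOne β j) ∧ ¬ AccPt t (𝓟 (Ebif β)) := by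
  have hβ0 : 0 < β := by linarith
  set s := orbitOne β (n + 1) with hs
  set D := β ^ (n + 1) with hD
  have hDn : D = β * β ^ n := by rw [hD, pow_succ']
  have hD2 : 2 < D := by rw [hDn]; nlinarith
  set p := 1 - s / (D - 1) with hp
  have hD1 : 0 < D - 1 := by linarith
  have hp_eq : (D - 1) * (1 - p) = s := by rw [hp]; field_simp; ring
  have hp1 : p < 1 := by
    have : 0 < s / (D - 1) := by positivity
    linarith
  have hlow : ∀ x, p ≤ x → x < 1 → ∀ j < n + 1, s ≤ orbitOne β j - β ^ j * (1 - x) := by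
    intro x hx hx1 j hj
    have h1 : β ^ j ≤ β ^ n := pow_le_pow_right₀ hβ.le (by omega)
    have h2 : β ^ j * (1 - x) ≤ β ^ n * (1 - p) := by gcongr
    have h3 := hrec j (by omega)
    have h4 : β ^ n * (1 - p) ≤ 2 * s := by
      rw [← hp_eq]
      have : β ^ n ≤ 2 * (D - 1) := by rw [hDn]; nlinarith
      nlinarith
    linarith
  have hiter : ∀ x, p ≤ x → x < 1 → ∀ j < n + 1,
      (Tbeta β)^[j] x = orbitOne β j - β ^ j * (1 - x) := fun x hx hx1 j hj =>
    iterate_eq_of_lt_one hβ0 hx1 (fun i hi => hpos.le.trans (hlow x hx hx1 i hi)) hj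
  have hreturn : ∀ x, p ≤ x → x < 1 → (Tbeta β)^[n + 1] x = Int.fract (s - D * (1 - x)) := by
    intro x hx hx1
    rw [Function.iterate_succ_apply', hiter x hx hx1 n (by omega), Tbeta, Int.fract_eq_fract]
    refine ⟨digitOne β n, ?_⟩
    rw [hs, orbitOne_succ_eq, hDn]
    ring
  have hp0 : 0 ≤ p := by
    have := hlow p le_rfl hp1 0 (by omega)
    simp [orbitOne_zero] at this
    linarith
  have hpp : (Tbeta β)^[n + 1] p = p := by
    rw [hreturn p le_rfl hp1, Int.fract_eq_iff]
    exact ⟨hp0, hp1, -1, by push_cast; linarith⟩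
  have hper : ∀ k, ∃ j < n + 1, (Tbeta β)^[k] p = (Tbeta β)^[j] p := fun k =>
    ⟨k % (n + 1), Nat.mod_lt _ (by omega),
      ((show Function.IsPeriodicPt (Tbeta β) (n + 1) p from hpp).iterate_mod_apply k).symm⟩
  obtain ⟨i, hi, himin⟩ := Finset.exists_min_image (Finset.range (n + 1))
    (fun j => (Tbeta β)^[j] p) ⟨0, by simp⟩
  simp only [Finset.mem_range] at hi himin
  set t := (Tbeta β)^[i] p with ht
  have htmin : ∀ k, t ≤ (Tbeta β)^[k] p := by
    intro k
    obtain ⟨j, hj, hkj⟩ := hper k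
    rw [hkj]
    exact himin j hj
  have hst : s ≤ t := by
    rw [ht, hiter p le_rfl hp1 i hi]
    exact hlow p le_rfl hp1 i hi
  have htt : ∀ k, (Tbeta β)^[k] t = (Tbeta β)^[k + i] p := fun k =>
    (Function.iterate_add_apply _ _ _ _).symm
  have hle : ∀ k, t ≤ (Tbeta β)^[k] t := fun k => by rw [htt]; exact htmin _
  have htE : t ∈ Ebif β :=
    mem_Ebif_of_le_iterate ⟨hpos.le.trans hst, (htmin 0).trans_lt hp1⟩ hle
  refine ⟨t, htE, hpos.trans_le hst, fun j hj => ?_, ?_⟩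
  · refine (himin j (by omega)).trans ?_
    rw [hiter p le_rfl hp1 j (by omega)]
    have : 0 ≤ β ^ j * (1 - p) := mul_nonneg (by positivity) (by linarith)
    linarith
  have hescape : ∀ x, p < x → x < 1 → ∃ k, (Tbeta β)^[k] x < s := by
    intro x hx hx1
    by_contra! hc
    have hgrow : ∀ m, p + D ^ m * (x - p) < 1 ∧
        (Tbeta β)^[(n + 1) * m] x = p + D ^ m * (x - p) := by
      intro m
      induction m with
      | zero => simpa using hx1
      | succ m ih =>
        obtain ⟨hlt, heq⟩ := ih
        set z := p + D ^ m * (x - p) with hz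
        have hpz : p < z := by
          have : 0 < D ^ m * (x - p) := mul_pos (by positivity) (by linarith)
          linarith
        have hnext : (Tbeta β)^[(n + 1) * (m + 1)] x = Int.fract (s - D * (1 - z)) := by
          rw [mul_add, mul_one, add_comm, Function.iterate_add_apply, heq, hreturn z hpz.le hlt]
        have hzeq : p + D ^ (m + 1) * (x - p) = s - D * (1 - z) + 1 := by
          rw [← hp_eq, hz]; ring
        have hDz : 0 < D * (1 - z) := mul_pos (by linarith) (by linarith)
        have hneg : s - D * (1 - z) < 0 := by
          by_contra hnn
          have h1 := hc ((n + 1) * (m + 1))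
          rw [hnext, Int.fract_eq_self.2
            ⟨not_lt.1 hnn, by linarith [orbitOne_succ_lt_one β n]⟩] at h1
          linarith
        have hgp : p ≤ s - D * (1 - z) + 1 := by
          rw [← hzeq]
          have : 0 ≤ D ^ (m + 1) * (x - p) := mul_nonneg (by positivity) (by linarith)
          linarith
        refine ⟨by linarith, ?_⟩
        rw [hnext, hzeq, Int.fract_eq_iff]
        exact ⟨hp0.trans hgp, by linarith, -1, by push_cast; ring⟩
    obtain ⟨m, hm⟩ := pow_unbounded_of_one_lt (1 / (x - p)) (show 1 < D by linarith)
    rw [div_lt_iff₀ (by linarith)] at hm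
    linarith [(hgrow m).1]
  have hev := (eventually_iterate_eq (fun k => hpos.trans_le (hst.trans (hle k))) (n + 1)).and
    (eventually_iterate_eq (fun k => hpos.trans_le (hst.trans (hle k))) (n + 1 - i))
  obtain ⟨η, hη, hball⟩ := Metric.eventually_nhds_iff.1 hev
  rw [accPt_iff_nhds]
  push Not
  refine ⟨Metric.ball t η, Metric.ball_mem_nhds t hη, ?_⟩
  rintro y ⟨hyη, hyE⟩
  rw [Metric.mem_ball, Real.dist_eq, abs_lt] at hyη
  by_contra hne
  rcases lt_or_gt_of_ne hne with hlt | hgt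
  · obtain ⟨z, ⟨hyz, hzlt⟩, hz⟩ := exists_survivor_near hyE
      (show y < t - (t - y) / D by
        have : (t - y) / D < t - y := div_lt_self (by linarith) (by linarith)
        linarith)
    have hq : 0 < (t - y) / D := div_pos (by linarith) (by linarith)
    have h1 := (hball (show dist z t < η by rw [Real.dist_eq, abs_lt]; constructor <;> linarith)).1
    have h2 := hz (n + 1)
    have h3 : (Tbeta β)^[n + 1] t = t := by
      rw [htt, add_comm, Function.iterate_add_apply, hpp]
    rw [h1, h3, ← hD] at h2
    have h4 : D * ((t - y) / D) < D * (t - z) := by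
      apply mul_lt_mul_of_pos_left <;> linarith
    rw [mul_div_cancel₀ _ (by linarith : D ≠ 0)] at h4
    linarith
  · obtain ⟨z, ⟨hyz, hzlt⟩, hz⟩ := exists_survivor_near hyE
      (show y < t + η by linarith)
    have h1 := (hball (show dist z t < η by rw [Real.dist_eq, abs_lt]; constructor <;> linarith)).2
    have h3 : (Tbeta β)^[n + 1 - i] t = p := by
      rw [htt, Nat.sub_add_cancel hi.le, hpp]
    rw [h3] at h1
    have h4 : 0 < β ^ (n + 1 - i) * (z - t) := mul_pos (by positivity) (by linarith)
    obtain ⟨k, hk⟩ := hescape ((Tbeta β)^[n + 1 - i] z) (by rw [h1]; linarith) (by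
      obtain ⟨m, hm⟩ : ∃ m, n + 1 - i = m + 1 := ⟨n - i, by omega⟩
      rw [hm, Function.iterate_succ_apply']
      exact Int.fract_lt_one _)
    rw [← Function.iterate_add_apply] at hk
    linarith [hz (k + (n + 1 - i))]

theorem Tbeta_div {β y : ℝ} (hβ : 0 < β) (hy : y ∈ Ico (0 : ℝ) 1) : Tbeta β (y / β) = y := by
  rw [Tbeta, mul_div_cancel₀ _ hβ.ne', Int.fract_eq_self]
  exact hy

theorem survivor_of_Tbeta {β r x : ℝ} (hx : x ∈ Ico (0 : ℝ) 1) (hr : r ≤ x)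
    (h : Tbeta β x ∈ survivor β r) : x ∈ survivor β r := by
  refine ⟨hx, fun n => ?_⟩
  cases n with
  | zero => exact hr
  | succ n => rw [Function.iterate_succ_apply]; exact h.2 n

theorem div_pow_mem_survivor {β r y : ℝ} (hβ : 1 < β) (hr : 0 ≤ r) (hy : y ∈ survivor β r)
    {j : ℕ} (hj : r ≤ y / β ^ j) : y / β ^ j ∈ survivor β r := by
  have hβ0 : 0 < β := by linarith
  induction j with
  | zero => simpa using hy
  | succ j ih =>
    have hle : y / β ^ (j + 1) ≤ y / β ^ j :=
      div_le_div_of_nonneg_left hy.1.1 (by positivity) (pow_le_pow_right₀ hβ.le (by omega))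
    have hmem := ih (hj.trans hle)
    refine survivor_of_Tbeta ⟨hr.trans hj, hle.trans_lt hmem.1.2⟩ hj ?_
    rw [pow_succ, ← div_div, Tbeta_div hβ0 hmem.1]
    exact hmem

/-- Contracting a survivor of level `r` below `r` gives a point of the bifurcation set. -/
theorem div_pow_mem_Ebif {β r y : ℝ} (hβ : 1 < β) (hy : y ∈ survivor β r) {N : ℕ}
    (hN : y / β ^ N ≤ r) : y / β ^ N ∈ Ebif β := by
  have hβ0 : 0 < β := by linarith
  have h0 : 0 ≤ y / β ^ N := div_nonneg hy.1.1 (by positivity)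
  have hmem : y / β ^ N ∈ survivor β (y / β ^ N) :=
    div_pow_mem_survivor hβ h0 ⟨hy.1, fun n => hN.trans (hy.2 n)⟩ le_rfl
  exact mem_Ebif_of_le_iterate hmem.1 hmem.2

theorem exists_accumulation {β δ : ℝ} (hβ : 1 < β) (hδ : 0 < δ) :
    ∃ t ∈ Ebif β, t ∈ Ioo 0 δ ∧ AccPt t (𝓟 (Ebif β)) := by
  have hβ0 : 0 < β := by linarith
  obtain ⟨M, hM⟩ := pow_unbounded_of_one_lt (1 / (β - 1)) hβ
  rw [div_lt_iff₀ (by linarith)] at hM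
  set B := β ^ M with hB
  have hB1 : 1 ≤ B := one_le_pow₀ hβ.le
  set r := 1 / β ^ 2 / B with hr
  have hr0 : 0 < r := by positivity
  have hββ : 1 / β ^ 2 ≤ 1 / β :=
    one_div_le_one_div_of_le hβ0 (by nlinarith)
  have hrβ : r ≤ 1 / β := (div_le_self (by positivity) hB1).trans hββ
  set g : ℝ → ℝ := fun x => (1 + x / B) / β with hg
  have hgT : ∀ x ∈ Ico (0 : ℝ) 1, g x ∈ Ico (1 / β) 1 ∧ Tbeta β (g x) = x / B := by
    intro x hx
    have h0 : 0 ≤ x / B := div_nonneg hx.1 (by linarith)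
    have h1 : x / B < β - 1 := by
      rw [div_lt_iff₀ (by linarith)]
      linarith [hx.2]
    refine ⟨⟨?_, ?_⟩, ?_⟩
    · simp only [hg]
      gcongr
      linarith
    · simp only [hg]
      rw [div_lt_one hβ0]
      linarith
    · simp only [hg]
      rw [Tbeta, mul_div_cancel₀ _ hβ0.ne', Int.fract_eq_iff]
      exact ⟨h0, (div_le_self hx.1 hB1).trans_lt hx.2, 1, by push_cast; ring⟩
  have hDpos : 0 < β * B - 1 := by nlinarith
  set v := B / (β * B - 1) with hv
  have hv01 : v ∈ Ico (0 : ℝ) 1 := by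
    refine ⟨by positivity, ?_⟩
    rw [hv, div_lt_one hDpos]
    linarith
  have hgv : g v = v := by
    have hmul : v * (β * B - 1) = B := div_mul_cancel₀ _ hDpos.ne'
    have hdiv : v / B = v * β - 1 := by
      rw [div_eq_iff (by linarith)]
      linear_combination -hmul
    simp only [hg]
    rw [div_eq_iff hβ0.ne', hdiv]
    ring
  have hvβ : 1 / β ≤ v := by
    have := (hgT v hv01).1.1
    rwa [hgv] at this
  have hTv : Tbeta β v = v / B := by
    have := (hgT v hv01).2
    rwa [hgv] at this
  have horb : ∀ n, ∃ j ≤ M, (Tbeta β)^[n] v = v / β ^ j := by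
    intro n
    induction n with
    | zero => exact ⟨0, by omega, by simp⟩
    | succ n ih =>
      obtain ⟨j, hj, hn⟩ := ih
      rw [Function.iterate_succ_apply', hn]
      cases j with
      | zero => exact ⟨M, le_rfl, by rw [pow_zero, div_one, hTv]⟩
      | succ j =>
        refine ⟨j, by omega, ?_⟩
        rw [pow_succ, ← div_div, Tbeta_div hβ0]
        exact ⟨div_nonneg hv01.1 (by positivity),
          (div_le_self hv01.1 (one_le_pow₀ hβ.le)).trans_lt hv01.2⟩
  have hvr : v ∈ survivor β r := by
    refine ⟨hv01, fun n => ?_⟩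
    obtain ⟨j, hj, hn⟩ := horb n
    rw [hn, hr]
    have h1 : β ^ j ≤ B := pow_le_pow_right₀ hβ.le hj
    exact div_le_div₀ hv01.1 (hββ.trans hvβ) (by positivity) h1
  have hgr : ∀ x ∈ survivor β r, 1 / β ^ 2 ≤ x → g x ∈ survivor β r := by
    intro x hx hx2
    obtain ⟨h1, h2⟩ := hgT x hx.1
    refine survivor_of_Tbeta ⟨(by positivity : (0 : ℝ) ≤ 1 / β).trans h1.1, h1.2⟩
      (hrβ.trans h1.1) ?_
    rw [h2]
    refine div_pow_mem_survivor hβ hr0.le hx ?_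
    rw [hr]
    gcongr
  have hu0 : 1 / β ^ 2 ≤ v / β := by
    rw [pow_two, ← div_div]
    gcongr
  have hu : ∀ k, g^[k] (v / β) ∈ survivor β r ∧ 1 / β ^ 2 ≤ g^[k] (v / β) := by
    intro k
    induction k with
    | zero =>
      refine ⟨?_, hu0⟩
      have := div_pow_mem_survivor hβ hr0.le hvr (j := 1)
        (by rw [pow_one]; exact (div_le_self (by positivity) hB1).trans hu0)
      simpa using this
    | succ k ih =>
      rw [Function.iterate_succ_apply']
      exact ⟨hgr _ ih.1 ih.2, hββ.trans (hgT _ ih.1.1).1.1⟩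
  have hconv : ∀ k, g^[k] (v / β) = v + (1 / (B * β)) ^ k * (v / β - v) := by
    intro k
    induction k with
    | zero => simp
    | succ k ih =>
      rw [Function.iterate_succ_apply', ih]
      calc g (v + (1 / (B * β)) ^ k * (v / β - v))
          = g v + (1 / (B * β)) ^ k * (v / β - v) / (B * β) := by
            simp only [hg]
            field_simp
            ring
        _ = _ := by rw [hgv, pow_succ]; ring
  have hv0 : 0 < v := (by positivity : 0 < 1 / β).trans_le hvβ
  obtain ⟨N, hN⟩ := pow_unbounded_of_one_lt (max (1 / r) (1 / δ)) hβ
  have hNr : 1 / β ^ N < r := by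
    rw [one_div_lt (by positivity) hr0]
    exact (le_max_left _ _).trans_lt hN
  have hNδ : 1 / β ^ N < δ := by
    rw [one_div_lt (by positivity) hδ]
    exact (le_max_right _ _).trans_lt hN
  have hsmall : ∀ x ∈ survivor β r, x / β ^ N ≤ 1 / β ^ N := fun x hx => by
    have := hx.1.2.le
    gcongr
  have hE : ∀ x ∈ survivor β r, x / β ^ N ∈ Ebif β := fun x hx =>
    div_pow_mem_Ebif hβ hx ((hsmall x hx).trans hNr.le)
  refine ⟨v / β ^ N, hE v hvr, ⟨by positivity, (hsmall v hvr).trans_lt hNδ⟩, ?_⟩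
  have hq : Tendsto (fun k : ℕ => (1 / (B * β)) ^ k) atTop (𝓝 0) := by
    refine tendsto_pow_atTop_nhds_zero_of_lt_one (by positivity) ?_
    rw [div_lt_one (by positivity)]
    nlinarith
  have hlim : Tendsto (fun k => g^[k] (v / β) / β ^ N) atTop (𝓝 (v / β ^ N)) := by
    simp only [hconv]
    simpa using ((hq.mul_const (v / β - v)).const_add v).div_const (β ^ N)
  rw [accPt_iff_nhds]
  intro U hU
  obtain ⟨k, hk⟩ := (hlim.eventually hU).exists
  refine ⟨_, ⟨hk, hE _ (hu k).1⟩, fun heq => ?_⟩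
  have h1 : g^[k] (v / β) = v := by
    have hpow : β ^ N ≠ 0 := by positivity
    exact (div_left_inj' hpow).1 heq
  rw [hconv] at h1
  have h2 : v / β < v := div_lt_self hv0 hβ
  have h3 : 0 < (1 / (B * β)) ^ k := by positivity
  nlinarith

theorem exists_isolated {β δ : ℝ} (hβ : 1 < β) (hδ : 0 < δ) (h0 : ∀ n, orbitOne β n ≠ 0)
    (hrec : ∀ N : ℕ, ∃ n ≥ N, ∀ j < n, orbitOne β n ≤ orbitOne β j / 3) :
    ∃ t ∈ Ebif β, t ∈ Ioo 0 δ ∧ ¬ AccPt t (𝓟 (Ebif β)) := by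
  have hsmall : ∀ m : ℕ, ∃ n, orbitOne β n ≤ (1 / 3) ^ m := by
    intro m
    induction m with
    | zero => exact ⟨0, by simp [orbitOne_zero]⟩
    | succ m ih =>
      obtain ⟨k, hk⟩ := ih
      obtain ⟨n, hn, h⟩ := hrec (k + 1)
      refine ⟨n, (h k (by omega)).trans ?_⟩
      rw [pow_succ]
      linarith
  obtain ⟨m, hm⟩ := exists_pow_lt_of_lt_one hδ (show (1 / 3 : ℝ) < 1 by norm_num)
  obtain ⟨k, hk⟩ := hsmall m
  obtain ⟨l, hl⟩ := pow_unbounded_of_one_lt 2 hβ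
  obtain ⟨n, hn, h⟩ := hrec (max k l + 1)
  obtain ⟨n, rfl⟩ : ∃ i, n = i + 1 := ⟨n - 1, by omega⟩
  have hkn : k ≤ n := by omega
  have hln : l ≤ n := by omega
  obtain ⟨t, htE, ht0, htle, hacc⟩ := exists_isolated_of_deep_record hβ
    (hl.le.trans (pow_le_pow_right₀ hβ.le hln))
    ((orbitOne_nonneg β _).lt_of_ne (h0 _).symm) (fun j hj => h j (by omega))
  exact ⟨t, htE, ⟨ht0, ((htle k hkn).trans hk).trans_lt hm⟩, hacc⟩

theorem infinite_of_forall_exists_mem_Ioo {E : Set ℝ} {p : ℝ → Prop}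
    (h : ∀ δ > 0, ∃ t ∈ E, t ∈ Ioo 0 δ ∧ p t) {δ : ℝ} (hδ : 0 < δ) :
    {t | t ∈ E ∩ Ioo 0 δ ∧ p t}.Infinite := by
  intro hfin
  obtain ⟨t₀, ht₀, ht₀δ, hp₀⟩ := h δ hδ
  obtain ⟨t, ⟨⟨-, htδ⟩, -⟩, hmin⟩ := Set.exists_min_image _ id hfin ⟨t₀, ⟨ht₀, ht₀δ⟩, hp₀⟩
  obtain ⟨u, hu, hut, hpu⟩ := h t htδ.1
  exact absurd (hmin u ⟨⟨hu, hut.1, hut.2.trans htδ.2⟩, hpu⟩) (not_le.2 hut.2)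

/-- For Lebesgue-almost every `β ∈ (1,∞)`, for every `δ > 0` the set
`E_β ∩ (0,δ)` contains infinitely many isolated points of `E_β` and infinitely many
accumulation points of `E_β`. -/
theorem ae_isolated_and_accumulation :
    ∀ᵐ β : ℝ ∂MeasureTheory.volume, 1 < β →
      ∀ δ : ℝ, 0 < δ →
        {t | t ∈ Ebif β ∩ Set.Ioo 0 δ ∧ ¬ AccPt t (𝓟 (Ebif β))}.Infinite ∧
        {t | t ∈ Ebif β ∩ Set.Ioo 0 δ ∧ AccPt t (𝓟 (Ebif β))}.Infinite := by
  filter_upwards [ae_frequently_deep_record] with β hrec hβ δ hδ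
  obtain ⟨h0, hrec⟩ := hrec hβ
  exact ⟨infinite_of_forall_exists_mem_Ioo (fun _ hε => exists_isolated hβ hε h0 hrec) hδ,
    infinite_of_forall_exists_mem_Ioo (fun _ hε => exists_accumulation hβ hε) hδ⟩
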